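/- arXiv:1711.10013 — 2 statements merged into one kernel-verified Lean document; each statement's English description precedes it below -/
import Mathlib

section
/- Let Z₁, Z₂ be independent random variables, each distributed as a standard Gaussian N(0,1). Let r ∈ ℝ, T > 0, q₁, q₂ ∈ ℝ, c, m, S₁, S₂ > 0, σ₁₁, σ₂₂ > 0 and σ₁₂ ∈ ℝ with ρ := σ₁₂/√(σ₁₁ σ₂₂) ∈ (-1, 1). Define Y₁ = (r - q₁)T - σ₁₁/2 + √σ₁₁ Z₁ and Y₂ = (r - q₂)T - σ₂₂/2 + √σ₂₂ ( ρ Z₁ + √(1-ρ²) Z₂ ), and set v = σ₁₁ + σ₂₂ - 2σ₁₂, F₁ = c S₁ e^{-q₁ T}, F₂ = m S₂ e^{-q₂ T}. Then e^{-rT} E[ max( c S₁ e^{Y₁} - m S₂ e^{Y₂}, 0 ) ] = F₁ Φ(d₁) - F₂ Φ(d₂), where d₁ = ( log(F₁/F₂) + v/2 ) / √v, d₂ = d₁ - √v, and Φ is the cumulative distribution function of the standard Gaussian measure on ℝ. -/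
/-! The payoff is `X - Y` on the exercise region `A = {Y ≤ X}` and `0` off it, where
`X = c S₁ e^{Y₁}` and `Y = m S₂ e^{Y₂}`. Taking logarithms, `A` is a half-space
`{k ≤ b₁ Z₁ + b₂ Z₂}` with `b₁² + b₂² = v`, so each of `𝔼[X 1_A]` and `𝔼[Y 1_A]` is a constant
times the integral of an exponential `exp (a₁ Z₁ + a₂ Z₂)` over a half-space.

Such an integral is found by a Cameron-Martin change of measure: under the exponentially tilted
measure `μ.tilted (a₁ Z₁ + a₂ Z₂)`, the variable `b₁ Z₁ + b₂ Z₂` is Gaussian with mean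
`a₁ b₁ + a₂ b₂` and variance `b₁² + b₂²` (`map_tilted_linear`), which is read off from its
moment-generating function. The integral is therefore `exp ((a₁² + a₂²) / 2)` times a value of the
standard Gaussian distribution function (`setIntegral_exp_halfSpace`). For `X` the mean shift gives
`d₁`, and for `Y` it gives `d₂`. -/

open MeasureTheory ProbabilityTheory

section Gaussian

variable {Ω : Type*} [MeasurableSpace Ω] {μ : Measure Ω} {Z₁ Z₂ : Ω → ℝ}

lemma integrable_exp_linear (hIndep : IndepFun Z₁ Z₂ μ) (hZ₁ : Measurable Z₁)
    (hZ₂ : Measurable Z₂) (h₁ : μ.map Z₁ = gaussianReal 0 1) (h₂ : μ.map Z₂ = gaussianReal 0 1)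
    (a₁ a₂ : ℝ) : Integrable (fun ω ↦ Real.exp (a₁ * Z₁ ω + a₂ * Z₂ ω)) μ := by
  have key : ∀ (a : ℝ) (Z : Ω → ℝ), Measurable Z → μ.map Z = gaussianReal 0 1 →
      Integrable (fun ω ↦ Real.exp (a * Z ω)) μ := by
    intro a Z hZ h
    have := integrable_exp_mul_gaussianReal (μ := 0) (v := 1) a
    rw [← h] at this
    exact this.comp_measurable hZ
  have hi : IndepFun (fun ω ↦ Real.exp (a₁ * Z₁ ω)) (fun ω ↦ Real.exp (a₂ * Z₂ ω)) μ :=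
    hIndep.comp (φ := fun x ↦ Real.exp (a₁ * x)) (ψ := fun x ↦ Real.exp (a₂ * x))
      (by fun_prop) (by fun_prop)
  simp_rw [Real.exp_add]
  exact hi.integrable_mul (key a₁ Z₁ hZ₁ h₁) (key a₂ Z₂ hZ₂ h₂)

lemma integral_exp_linear (hIndep : IndepFun Z₁ Z₂ μ) (hZ₁ : Measurable Z₁)
    (hZ₂ : Measurable Z₂) (h₁ : μ.map Z₁ = gaussianReal 0 1) (h₂ : μ.map Z₂ = gaussianReal 0 1)
    (a₁ a₂ : ℝ) :
    ∫ ω, Real.exp (a₁ * Z₁ ω + a₂ * Z₂ ω) ∂μ = Real.exp ((a₁ ^ 2 + a₂ ^ 2) / 2) := by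
  have hi : IndepFun (fun ω ↦ Real.exp (a₁ * Z₁ ω)) (fun ω ↦ Real.exp (a₂ * Z₂ ω)) μ :=
    hIndep.comp (φ := fun x ↦ Real.exp (a₁ * x)) (ψ := fun x ↦ Real.exp (a₂ * x))
      (by fun_prop) (by fun_prop)
  have e₁ := mgf_gaussianReal h₁ a₁
  have e₂ := mgf_gaussianReal h₂ a₂
  simp only [mgf] at e₁ e₂
  simp_rw [Real.exp_add]
  rw [hi.integral_fun_mul_eq_mul_integral (by fun_prop) (by fun_prop), e₁, e₂, ← Real.exp_add]
  congr 1
  push_cast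
  ring

/-- Cameron-Martin: the exponential tilt by `a₁ Z₁ + a₂ Z₂` shifts the mean of the Gaussian
variable `b₁ Z₁ + b₂ Z₂` by the covariance `a₁ b₁ + a₂ b₂` and keeps its variance. -/
lemma map_tilted_linear [IsProbabilityMeasure μ] (hIndep : IndepFun Z₁ Z₂ μ) (hZ₁ : Measurable Z₁)
    (hZ₂ : Measurable Z₂) (h₁ : μ.map Z₁ = gaussianReal 0 1) (h₂ : μ.map Z₂ = gaussianReal 0 1)
    (a₁ a₂ b₁ b₂ : ℝ) :
    (μ.tilted (fun ω ↦ a₁ * Z₁ ω + a₂ * Z₂ ω)).map (fun ω ↦ b₁ * Z₁ ω + b₂ * Z₂ ω)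
      = gaussianReal (a₁ * b₁ + a₂ * b₂) (b₁ ^ 2 + b₂ ^ 2).toNNReal := by
  have hexpint := integrable_exp_linear hIndep hZ₁ hZ₂ h₁ h₂
  have : IsProbabilityMeasure (μ.tilted (fun ω ↦ a₁ * Z₁ ω + a₂ * Z₂ ω)) :=
    isProbabilityMeasure_tilted (hexpint a₁ a₂)
  have hmgf : mgf (fun ω ↦ b₁ * Z₁ ω + b₂ * Z₂ ω) (μ.tilted (fun ω ↦ a₁ * Z₁ ω + a₂ * Z₂ ω))
      = mgf id (gaussianReal (a₁ * b₁ + a₂ * b₂) (b₁ ^ 2 + b₂ ^ 2).toNNReal) := by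
    rw [mgf_id_gaussianReal]
    ext t
    rw [mgf, integral_exp_tilted, integral_exp_linear hIndep hZ₁ hZ₂ h₁ h₂]
    have : ∀ ω, ((fun ω ↦ a₁ * Z₁ ω + a₂ * Z₂ ω) + fun ω ↦ t * (b₁ * Z₁ ω + b₂ * Z₂ ω)) ω
        = (a₁ + t * b₁) * Z₁ ω + (a₂ + t * b₂) * Z₂ ω := by
      intro ω
      simp only [Pi.add_apply]
      ring
    simp_rw [this]
    rw [integral_exp_linear hIndep hZ₁ hZ₂ h₁ h₂, ← Real.exp_sub,
      Real.coe_toNNReal _ (by positivity)]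
    congr 1
    ring
  have hc := eqOn_complexMGF_of_mgf hmgf
  rw [integrableExpSet_eq_of_mgf hmgf, integrableExpSet_id_gaussianReal] at hc
  have := Measure.ext_of_complexMGF_eq (by fun_prop) aemeasurable_id
    (funext fun z ↦ hc (x := z) (by simp))
  rwa [Measure.map_id] at this

lemma gaussianReal_Ici_toReal {e w k : ℝ} (hw : 0 < w) :
    ((gaussianReal e w.toNNReal) (Set.Ici k)).toReal
      = ((gaussianReal 0 1) (Set.Iic ((e - k) / Real.sqrt w))).toReal := by
  have hs : 0 < Real.sqrt w := Real.sqrt_pos.2 hw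
  -- A variable of law `N(e, w)` is realized as `e - √w Z` with `Z` standard Gaussian, so that
  -- its upper tails are lower tails of `Z`.
  have h : gaussianReal e w.toNNReal
      = (gaussianReal 0 1).map (fun x ↦ e - Real.sqrt w * x) := by
    have : (fun x : ℝ ↦ e - Real.sqrt w * x) = (fun x ↦ e - x) ∘ (fun x ↦ Real.sqrt w * x) := rfl
    rw [this, ← Measure.map_map (by fun_prop) (by fun_prop), gaussianReal_map_const_mul,
      gaussianReal_map_const_sub]
    congr 1
    · simp
    · ext
      simp [Real.sq_sqrt hw.le, hw.le]
  rw [h, Measure.map_apply (by fun_prop) measurableSet_Ici]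
  congr 2
  ext x
  simp only [Set.mem_preimage, Set.mem_Ici, Set.mem_Iic, le_div_iff₀ hs]
  constructor <;> intro hx <;> linarith

/-- An exponential integrated over a half-space: dividing by the total integral
`exp ((a₁² + a₂²) / 2)` gives the probability of the half-space under the tilted measure, where
`b₁ Z₁ + b₂ Z₂` is Gaussian by `map_tilted_linear`. -/
lemma setIntegral_exp_halfSpace [IsProbabilityMeasure μ] (hIndep : IndepFun Z₁ Z₂ μ)
    (hZ₁ : Measurable Z₁) (hZ₂ : Measurable Z₂)
    (h₁ : μ.map Z₁ = gaussianReal 0 1) (h₂ : μ.map Z₂ = gaussianReal 0 1)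
    (a₁ a₂ b₁ b₂ k : ℝ) (hb : 0 < b₁ ^ 2 + b₂ ^ 2) :
    ∫ ω in {ω | k ≤ b₁ * Z₁ ω + b₂ * Z₂ ω}, Real.exp (a₁ * Z₁ ω + a₂ * Z₂ ω) ∂μ
      = Real.exp ((a₁ ^ 2 + a₂ ^ 2) / 2) * ((gaussianReal 0 1)
        (Set.Iic ((a₁ * b₁ + a₂ * b₂ - k) / Real.sqrt (b₁ ^ 2 + b₂ ^ 2)))).toReal := by
  rw [← gaussianReal_Ici_toReal hb, ← map_tilted_linear hIndep hZ₁ hZ₂ h₁ h₂,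
    Measure.map_apply (by fun_prop) measurableSet_Ici, tilted_apply_eq_ofReal_integral,
    ENNReal.toReal_ofReal (by positivity), integral_div,
    integral_exp_linear hIndep hZ₁ hZ₂ h₁ h₂, mul_div_cancel₀ _ (Real.exp_pos _).ne']
  rfl

end Gaussian

/-- Extended Margrabe formula: for jointly Gaussian log-prices built from two
independent standard Gaussians, the discounted expected exchange payoff equals
`F₁ Φ(d₁) - F₂ Φ(d₂)`. -/
theorem margrabe_formula
    {Ω : Type*} [MeasurableSpace Ω] (μ : Measure Ω) [IsProbabilityMeasure μ]
    (Z₁ Z₂ : Ω → ℝ) (hZ₁ : Measurable Z₁) (hZ₂ : Measurable Z₂)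
    (hIndep : IndepFun Z₁ Z₂ μ)
    (hZ₁law : μ.map Z₁ = gaussianReal 0 1) (hZ₂law : μ.map Z₂ = gaussianReal 0 1)
    (r T q₁ q₂ c m S₁ S₂ σ₁₁ σ₂₂ σ₁₂ ρ : ℝ)
    (hT : 0 < T) (hc : 0 < c) (hm : 0 < m) (hS₁ : 0 < S₁) (hS₂ : 0 < S₂)
    (hσ₁₁ : 0 < σ₁₁) (hσ₂₂ : 0 < σ₂₂)
    (hρ : ρ = σ₁₂ / Real.sqrt (σ₁₁ * σ₂₂)) (hρ₁ : -1 < ρ) (hρ₂ : ρ < 1)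
    (Y₁ Y₂ : Ω → ℝ)
    (hY₁ : ∀ ω, Y₁ ω = (r - q₁) * T - σ₁₁ / 2 + Real.sqrt σ₁₁ * Z₁ ω)
    (hY₂ : ∀ ω, Y₂ ω = (r - q₂) * T - σ₂₂ / 2 +
      Real.sqrt σ₂₂ * (ρ * Z₁ ω + Real.sqrt (1 - ρ ^ 2) * Z₂ ω))
    (v F₁ F₂ d₁ d₂ : ℝ)
    (hv : v = σ₁₁ + σ₂₂ - 2 * σ₁₂)
    (hF₁ : F₁ = c * S₁ * Real.exp (-q₁ * T)) (hF₂ : F₂ = m * S₂ * Real.exp (-q₂ * T))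
    (hd₁ : d₁ = (Real.log (F₁ / F₂) + v / 2) / Real.sqrt v)
    (hd₂ : d₂ = d₁ - Real.sqrt v)
    (Φ : ℝ → ℝ) (hΦ : ∀ x, Φ x = ((gaussianReal 0 1) (Set.Iic x)).toReal) :
    Real.exp (-r * T) *
        (∫ ω, max (c * S₁ * Real.exp (Y₁ ω) - m * S₂ * Real.exp (Y₂ ω)) 0 ∂μ)
      = F₁ * Φ d₁ - F₂ * Φ d₂ := by
  have hF₁pos : 0 < F₁ := by rw [hF₁]; positivity
  have hF₂pos : 0 < F₂ := by rw [hF₂]; positivity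
  set s₁ := Real.sqrt σ₁₁ with hs₁
  set s₂ := Real.sqrt σ₂₂ with hs₂
  set τ := Real.sqrt (1 - ρ ^ 2) with hτ
  have hs₁pos : 0 < s₁ := Real.sqrt_pos.2 hσ₁₁
  have hs₂pos : 0 < s₂ := Real.sqrt_pos.2 hσ₂₂
  have hρsq : 0 < 1 - ρ ^ 2 := by nlinarith
  have hτpos : 0 < τ := Real.sqrt_pos.2 hρsq
  have hs₁sq : s₁ ^ 2 = σ₁₁ := Real.sq_sqrt hσ₁₁.le
  have hs₂sq : s₂ ^ 2 = σ₂₂ := Real.sq_sqrt hσ₂₂.le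
  have hτsq : τ ^ 2 = 1 - ρ ^ 2 := Real.sq_sqrt hρsq.le
  have hσ₁₂ : σ₁₂ = ρ * (s₁ * s₂) := by
    rw [hρ, Real.sqrt_mul hσ₁₁.le, div_mul_cancel₀ _ (by positivity)]
  -- The exercise region is `{k ≤ b₁ Z₁ + b₂ Z₂}`, with `b₁ Z₁ + b₂ Z₂` the centred part of
  -- `Y₁ - Y₂`.
  obtain ⟨b₁, hb₁⟩ : ∃ b, b = s₁ - s₂ * ρ := ⟨_, rfl⟩
  obtain ⟨b₂, hb₂⟩ : ∃ b, b = -(s₂ * τ) := ⟨_, rfl⟩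
  obtain ⟨k, hk⟩ : ∃ k, k = (σ₁₁ - σ₂₂) / 2 - Real.log (F₁ / F₂) := ⟨_, rfl⟩
  have hvb : b₁ ^ 2 + b₂ ^ 2 = v := by
    rw [hb₁, hb₂, hv, hσ₁₂, ← hs₁sq, ← hs₂sq]
    linear_combination s₂ ^ 2 * hτsq
  have hb : 0 < b₁ ^ 2 + b₂ ^ 2 := by
    have : b₂ ≠ 0 := by rw [hb₂]; exact neg_ne_zero.2 (by positivity)
    positivity
  have hvpos : 0 < v := hvb ▸ hb
  have hX : ∀ ω, c * S₁ * Real.exp (Y₁ ω)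
      = Real.exp (r * T) * F₁ * Real.exp (-σ₁₁ / 2) * Real.exp (s₁ * Z₁ ω + 0 * Z₂ ω) := by
    intro ω
    have : Y₁ ω = r * T + -q₁ * T + -σ₁₁ / 2 + (s₁ * Z₁ ω + 0 * Z₂ ω) := by rw [hY₁]; ring
    rw [this, hF₁, Real.exp_add, Real.exp_add, Real.exp_add]
    ring
  have hY : ∀ ω, m * S₂ * Real.exp (Y₂ ω)
      = Real.exp (r * T) * F₂ * Real.exp (-σ₂₂ / 2) *
        Real.exp (s₂ * ρ * Z₁ ω + s₂ * τ * Z₂ ω) := by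
    intro ω
    have : Y₂ ω = r * T + -q₂ * T + -σ₂₂ / 2 + (s₂ * ρ * Z₁ ω + s₂ * τ * Z₂ ω) := by
      rw [hY₂]; ring
    rw [this, hF₂, Real.exp_add, Real.exp_add, Real.exp_add]
    ring
  have hexercise : ∀ ω, m * S₂ * Real.exp (Y₂ ω) ≤ c * S₁ * Real.exp (Y₁ ω)
      ↔ k ≤ b₁ * Z₁ ω + b₂ * Z₂ ω := by
    intro ω
    rw [hX, hY, ← Real.log_le_log_iff (by positivity) (by positivity),
      Real.log_mul (by positivity) (by positivity), Real.log_mul (by positivity) (by positivity),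
      Real.log_mul (by positivity) (by positivity), Real.log_mul (by positivity) (by positivity),
      Real.log_mul (by positivity) (by positivity), Real.log_mul (by positivity) (by positivity),
      hk, hb₁, hb₂, Real.log_div hF₁pos.ne' hF₂pos.ne']
    simp only [Real.log_exp]
    constructor <;> intro h <;> linarith
  have hpayoff : ∀ ω, max (c * S₁ * Real.exp (Y₁ ω) - m * S₂ * Real.exp (Y₂ ω)) 0
      = {ω | k ≤ b₁ * Z₁ ω + b₂ * Z₂ ω}.indicator
        (fun ω ↦ c * S₁ * Real.exp (Y₁ ω) - m * S₂ * Real.exp (Y₂ ω)) ω := by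
    intro ω
    by_cases h : k ≤ b₁ * Z₁ ω + b₂ * Z₂ ω
    · rw [Set.indicator_of_mem (show ω ∈ {ω | k ≤ b₁ * Z₁ ω + b₂ * Z₂ ω} from h)]
      exact max_eq_left (sub_nonneg.2 ((hexercise ω).2 h))
    · rw [Set.indicator_of_notMem (show ω ∉ {ω | k ≤ b₁ * Z₁ ω + b₂ * Z₂ ω} from h)]
      exact max_eq_right (sub_nonpos.2 (not_le.1 (mt (hexercise ω).1 h)).le)
  have hexpint := integrable_exp_linear hIndep hZ₁ hZ₂ hZ₁law hZ₂law
  have harg₁ : (s₁ * b₁ + 0 * b₂ - k) / Real.sqrt (b₁ ^ 2 + b₂ ^ 2) = d₁ := by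
    rw [hvb, hd₁]
    congr 1
    rw [hk, hb₁, hv, hσ₁₂, ← hs₁sq, ← hs₂sq]
    ring
  have harg₂ : (s₂ * ρ * b₁ + s₂ * τ * b₂ - k) / Real.sqrt (b₁ ^ 2 + b₂ ^ 2) = d₂ := by
    have hsv : Real.sqrt v ≠ 0 := (Real.sqrt_pos.2 hvpos).ne'
    rw [hvb, hd₂, hd₁, div_sub' hsv]
    congr 1
    rw [Real.mul_self_sqrt hvpos.le, hk, hb₁, hb₂, hv, hσ₁₂, ← hs₁sq, ← hs₂sq]
    linear_combination -s₂ ^ 2 * hτsq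
  have hnorm₁ : Real.exp (-σ₁₁ / 2) * Real.exp ((s₁ ^ 2 + 0 ^ 2) / 2) = 1 := by
    rw [← Real.exp_add, Real.exp_eq_one_iff, hs₁sq]
    ring
  have hnorm₂ : Real.exp (-σ₂₂ / 2) * Real.exp (((s₂ * ρ) ^ 2 + (s₂ * τ) ^ 2) / 2) = 1 := by
    rw [← Real.exp_add, Real.exp_eq_one_iff, ← hs₂sq]
    linear_combination s₂ ^ 2 / 2 * hτsq
  have hdisc : Real.exp (-r * T) * Real.exp (r * T) = 1 := by
    rw [← Real.exp_add, Real.exp_eq_one_iff]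
    ring
  have hmeas : MeasurableSet {ω | k ≤ b₁ * Z₁ ω + b₂ * Z₂ ω} :=
    measurableSet_le (by fun_prop) (by fun_prop)
  simp_rw [hpayoff]
  rw [integral_indicator hmeas]
  simp_rw [hX, hY]
  rw [integral_sub ((hexpint _ _).const_mul _).integrableOn
      ((hexpint _ _).const_mul _).integrableOn,
    integral_const_mul, integral_const_mul,
    setIntegral_exp_halfSpace hIndep hZ₁ hZ₂ hZ₁law hZ₂law _ _ _ _ _ hb,
    setIntegral_exp_halfSpace hIndep hZ₁ hZ₂ hZ₁law hZ₂law _ _ _ _ _ hb,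
    harg₁, harg₂, ← hΦ, ← hΦ]
  calc _ = (Real.exp (-r * T) * Real.exp (r * T)) *
        (F₁ * (Real.exp (-σ₁₁ / 2) * Real.exp ((s₁ ^ 2 + 0 ^ 2) / 2)) * Φ d₁
          - F₂ * (Real.exp (-σ₂₂ / 2) *
            Real.exp (((s₂ * ρ) ^ 2 + (s₂ * τ) ^ 2) / 2)) * Φ d₂) := by ring
    _ = _ := by rw [hdisc, hnorm₁, hnorm₂]; ring
end

section
/- Let X be a real-valued random variable with law μ and characteristic function φ_X(u) = E[e^{iuX}]. Assume φ_X is Lebesgue integrable on ℝ, and let a < b be real numbers. Then for every real u, E[ e^{iuX} 1_{[a,b]}(X) ] = -(i/(2π)) ∫_ℝ f(y) φ_X(u - y) dy, where f(y) = (e^{iby} - e^{iay})/y for y ≠ 0 and f(0) = i(b - a). -/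
/-!
If the law of `X` had density `p`, Fubini and Fourier inversion would give the formula at once.  The
density can be avoided: for a smooth compactly supported `G`, writing `G` as the inverse Fourier
transform of `𝓕 G` and exchanging the two integrals gives the Parseval identity
`E[G(X)] = ∫ 𝓕 G(w) φ(2πw) dw` (`integral_comp_eq_integral_fourier_mul`), whatever the law of `X`.
Apply it to `G n x = e^{iux} g n x`, where `g n` is a smooth cutoff that equals `1` on `[a, b]` and
vanishes outside `[a - 1/(n+1), b + 1/(n+1)]`.  The `g n` converge to `1_{[a,b]}` at *every* point,
so the left side tends to `E[e^{iuX} 1_{[a,b]}(X)]` even though atoms at the endpoints have not been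
excluded.  On the right, `𝓕 (G n)` is bounded uniformly in `n` and converges pointwise to
`∫_a^b e^{i(u - 2πw)x} dx = -i f(u - 2πw)`; since `φ` is integrable, dominated convergence applies,
and the substitution `y = u - 2πw` finishes the proof.
-/

open MeasureTheory
open Filter Topology FourierTransform

/-- Parseval identity between a law and a function that satisfies Fourier inversion. -/
lemma integral_comp_eq_integral_fourier_mul
    {Ω : Type*} [MeasurableSpace Ω] (μ : Measure Ω) [IsProbabilityMeasure μ]
    (X : Ω → ℝ) (hX : Measurable X)
    (φ : ℝ → ℂ) (hφ : ∀ u : ℝ, φ u = ∫ ω, Complex.exp (Complex.I * (u : ℂ) * (X ω : ℂ)) ∂μ)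
    (G : ℝ → ℂ) (hGc : Continuous G) (hG : Integrable G) (hG' : Integrable (𝓕 G)) :
    ∫ ω, G (X ω) ∂μ = ∫ w : ℝ, 𝓕 G w * φ (2 * Real.pi * w) := by
  have h1 : ∀ ω, G (X ω) =
      ∫ w : ℝ, 𝓕 G w * Complex.exp (Complex.I * ((2 * Real.pi * w : ℝ) : ℂ) * (X ω : ℂ)) := by
    intro ω
    rw [← congrFun (hGc.fourierInv_fourier_eq hG hG') (X ω), Real.fourierInv_eq']
    refine integral_congr_ae (ae_of_all _ fun w => ?_)
    simp only [smul_eq_mul, mul_comm (Complex.exp _)]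
    congr 2
    simp
    ring
  simp_rw [h1, hφ]
  rw [integral_integral_swap]
  · simp_rw [integral_const_mul]
  · refine (hG'.comp_snd μ).mono ?_ (ae_of_all _ fun p => ?_)
    · exact (hG'.comp_snd μ).aestronglyMeasurable.mul
        (Measurable.aestronglyMeasurable (by fun_prop))
    · simp only [Function.uncurry, norm_mul]
      rw [show Complex.I * ((2 * Real.pi * p.2 : ℝ) : ℂ) * (X p.1 : ℂ)
        = ((2 * Real.pi * p.2 * X p.1 : ℝ) : ℂ) * Complex.I by push_cast; ring,
        Complex.norm_exp_ofReal_mul_I, mul_one]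

/-- A smooth cutoff, equal to `1` on `[a, b]` and to `0` outside `[a - 1/(n+1), b + 1/(n+1)]`. -/
noncomputable def cutoff (a b : ℝ) (n : ℕ) (x : ℝ) : ℝ :=
  Real.smoothTransition (1 + (n + 1) * (x - a)) * Real.smoothTransition (1 + (n + 1) * (b - x))

lemma contDiff_cutoff (a b : ℝ) (n : ℕ) {k : ℕ∞} : ContDiff ℝ k (cutoff a b n) := by
  unfold cutoff
  exact (Real.smoothTransition.contDiff.comp (by fun_prop)).mul
    (Real.smoothTransition.contDiff.comp (by fun_prop))

lemma cutoff_nonneg (a b : ℝ) (n : ℕ) (x : ℝ) : 0 ≤ cutoff a b n x :=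
  mul_nonneg (Real.smoothTransition.nonneg _) (Real.smoothTransition.nonneg _)

lemma cutoff_le_one (a b : ℝ) (n : ℕ) (x : ℝ) : cutoff a b n x ≤ 1 :=
  mul_le_one₀ (Real.smoothTransition.le_one _) (Real.smoothTransition.nonneg _)
    (Real.smoothTransition.le_one _)

lemma cutoff_eq_zero_of_lt {a b x : ℝ} {n : ℕ} (h : 1 ≤ (n + 1) * (a - x)) :
    cutoff a b n x = 0 := by
  rw [cutoff, Real.smoothTransition.zero_of_nonpos (by linarith), zero_mul]

lemma cutoff_eq_zero_of_gt {a b x : ℝ} {n : ℕ} (h : 1 ≤ (n + 1) * (x - b)) :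
    cutoff a b n x = 0 := by
  rw [cutoff, Real.smoothTransition.zero_of_nonpos (x := 1 + (n + 1) * (b - x)) (by linarith),
    mul_zero]

lemma cutoff_eq_zero {a b x : ℝ} (n : ℕ) (h : x ∉ Set.Icc (a - 1) (b + 1)) :
    cutoff a b n x = 0 := by
  have hn : (0 : ℝ) ≤ n := n.cast_nonneg
  by_cases h1 : a - 1 ≤ x
  · have : b + 1 < x := by
      by_contra h2
      exact h ⟨h1, not_lt.1 h2⟩
    exact cutoff_eq_zero_of_gt (by nlinarith)
  · exact cutoff_eq_zero_of_lt (by nlinarith)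

lemma tendsto_cutoff (a b x : ℝ) :
    Tendsto (fun n => (cutoff a b n x : ℂ)) atTop
      (𝓝 ((Set.Icc a b).indicator (fun _ => (1 : ℂ)) x)) := by
  have key : ∀ d : ℝ, 0 < d → ∀ᶠ n : ℕ in atTop, 1 ≤ ((n : ℝ) + 1) * d := by
    intro d hd
    have := (tendsto_natCast_atTop_atTop (R := ℝ)).eventually_ge_atTop (1 / d)
    filter_upwards [this] with n hn
    rw [div_le_iff₀ hd] at hn
    nlinarith
  apply tendsto_const_nhds.congr'
  by_cases h : x ∈ Set.Icc a b
  · refine Eventually.of_forall fun n => ?_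
    have hn : (0 : ℝ) ≤ n := n.cast_nonneg
    have h1 := sub_nonneg.2 h.1
    have h2 := sub_nonneg.2 h.2
    have e1 := Real.smoothTransition.one_of_one_le (x := 1 + (n + 1) * (x - a)) (by nlinarith)
    have e2 := Real.smoothTransition.one_of_one_le (x := 1 + (n + 1) * (b - x)) (by nlinarith)
    simp only [Set.indicator_of_mem h, cutoff, e1, e2]
    simp
  · rw [Set.indicator_of_notMem h]
    by_cases h1 : a ≤ x
    · have : b < x := by
        by_contra h2
        exact h ⟨h1, not_lt.1 h2⟩
      filter_upwards [key (x - b) (by linarith)] with n hn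
      simp [cutoff_eq_zero_of_gt hn]
    · filter_upwards [key (a - x) (by linarith)] with n hn
      simp [cutoff_eq_zero_of_lt hn]

lemma norm_exp_mul_cutoff_le (a b u : ℝ) (n : ℕ) (x : ℝ) :
    ‖Complex.exp (Complex.I * (u : ℂ) * (x : ℂ)) * (cutoff a b n x : ℂ)‖
      ≤ (Set.Icc (a - 1) (b + 1)).indicator (fun _ => (1 : ℝ)) x := by
  rw [norm_mul, show Complex.I * (u : ℂ) * (x : ℂ) = ((u * x : ℝ) : ℂ) * Complex.I by
    push_cast; ring, Complex.norm_exp_ofReal_mul_I, one_mul, Complex.norm_real,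
    Real.norm_of_nonneg (cutoff_nonneg a b n x)]
  by_cases h : x ∈ Set.Icc (a - 1) (b + 1)
  · rw [Set.indicator_of_mem h]
    exact cutoff_le_one a b n x
  · rw [Set.indicator_of_notMem h, cutoff_eq_zero n h]

lemma integrable_indicator_Icc_one (c d : ℝ) :
    Integrable ((Set.Icc c d).indicator (fun _ => (1 : ℝ))) :=
  (integrable_indicator_iff measurableSet_Icc).2 (integrableOn_const (by simp))

lemma exp_mul_cutoff_schwartz (a b u : ℝ) (n : ℕ) :
    ∃ S : SchwartzMap ℝ ℂ, (S : ℝ → ℂ) =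
      fun x : ℝ => Complex.exp (Complex.I * (u : ℂ) * (x : ℂ)) * (cutoff a b n x : ℂ) := by
  have h1 : HasCompactSupport
      (fun x : ℝ => Complex.exp (Complex.I * (u : ℂ) * (x : ℂ)) * (cutoff a b n x : ℂ)) :=
    HasCompactSupport.intro (isCompact_Icc (a := a - 1) (b := b + 1))
      fun x hx => by simp [cutoff_eq_zero n hx]
  have h2 : ContDiff ℝ (⊤ : ℕ∞)
      (fun x : ℝ => Complex.exp (Complex.I * (u : ℂ) * (x : ℂ)) * (cutoff a b n x : ℂ)) :=
    (contDiff_const.mul Complex.ofRealCLM.contDiff).cexp.mul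
      (Complex.ofRealCLM.contDiff.comp (contDiff_cutoff a b n))
  exact ⟨h1.toSchwartzMap h2, rfl⟩

/-- `f = i · ∫_a^b e^{iyx} dx`, including at `y = 0`. -/
lemma eq_I_mul_integral (a b : ℝ) (f : ℝ → ℂ)
    (hf0 : f 0 = Complex.I * ((b : ℂ) - (a : ℂ)))
    (hf : ∀ y : ℝ, y ≠ 0 →
      f y = (Complex.exp (Complex.I * (b : ℂ) * (y : ℂ))
        - Complex.exp (Complex.I * (a : ℂ) * (y : ℂ))) / (y : ℂ)) (y : ℝ) :
    f y = Complex.I * ∫ x in a..b, Complex.exp (Complex.I * (y : ℂ) * (x : ℂ)) := by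
  rcases eq_or_ne y 0 with rfl | hy
  · simp [hf0]
  · have hy' : (y : ℂ) ≠ 0 := by exact_mod_cast hy
    rw [hf y hy, integral_exp_mul_complex (mul_ne_zero Complex.I_ne_zero hy'),
      mul_right_comm Complex.I (y : ℂ) (b : ℂ), mul_right_comm Complex.I (y : ℂ) (a : ℂ)]
    field_simp [Complex.I_ne_zero]

/-- Convolution (Parseval-type) representation of the constrained characteristic
function: `E[e^{iuX} 1_{[a,b]}(X)] = -(i/(2π)) ∫ f(y) φ_X(u - y) dy`, where
`f(y) = (e^{iby} - e^{iay})/y` for `y ≠ 0` and `f(0) = i(b - a)`. -/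
theorem constrained_charFun_convolution
    {Ω : Type*} [MeasurableSpace Ω] (μ : Measure Ω) [IsProbabilityMeasure μ]
    (X : Ω → ℝ) (hX : Measurable X)
    (φ : ℝ → ℂ) (hφ : ∀ u : ℝ, φ u = ∫ ω, Complex.exp (Complex.I * (u : ℂ) * (X ω : ℂ)) ∂μ)
    (hφInt : Integrable φ)
    (a b : ℝ) (hab : a < b)
    (f : ℝ → ℂ)
    (hf0 : f 0 = Complex.I * ((b : ℂ) - (a : ℂ)))
    (hf : ∀ y : ℝ, y ≠ 0 →
      f y = (Complex.exp (Complex.I * (b : ℂ) * (y : ℂ)) - Complex.exp (Complex.I * (a : ℂ) * (y : ℂ))) / (y : ℂ)) :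
    ∀ u : ℝ,
      (∫ ω, Complex.exp (Complex.I * (u : ℂ) * (X ω : ℂ)) *
          (Set.Icc a b).indicator (fun _ => (1 : ℂ)) (X ω) ∂μ)
        = -(Complex.I / (2 * (Real.pi : ℂ))) * ∫ y : ℝ, f y * φ (u - y) := by
  intro u
  set G : ℕ → ℝ → ℂ :=
    fun n x => Complex.exp (Complex.I * (u : ℂ) * (x : ℂ)) * (cutoff a b n x : ℂ) with hGdef
  have hGint : ∀ n, Integrable (G n) := fun n => by
    obtain ⟨S, hS⟩ := exp_mul_cutoff_schwartz a b u n
    simpa only [hGdef, hS] using S.integrable (μ := volume)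
  have hGcont : ∀ n, Continuous (G n) := fun n => by
    obtain ⟨S, hS⟩ := exp_mul_cutoff_schwartz a b u n
    simpa only [hGdef, hS] using S.continuous
  have hGF : ∀ n, Integrable (𝓕 (G n)) := fun n => by
    obtain ⟨S, hS⟩ := exp_mul_cutoff_schwartz a b u n
    have := (𝓕 S).integrable (μ := volume)
    rwa [SchwartzMap.fourier_coe, hS] at this
  have hpars := fun n => integral_comp_eq_integral_fourier_mul μ X hX φ hφ (G n)
    (hGcont n) (hGint n) (hGF n)
  have hGlim : ∀ x, Tendsto (fun n => G n x) atTop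
      (𝓝 (Complex.exp (Complex.I * (u : ℂ) * (x : ℂ)) *
        (Set.Icc a b).indicator (fun _ => (1 : ℂ)) x)) :=
    fun x => (tendsto_cutoff a b x).const_mul _
  have hL : Tendsto (fun n => ∫ ω, G n (X ω) ∂μ) atTop
      (𝓝 (∫ ω, Complex.exp (Complex.I * (u : ℂ) * (X ω : ℂ)) *
          (Set.Icc a b).indicator (fun _ => (1 : ℂ)) (X ω) ∂μ)) := by
    refine tendsto_integral_of_dominated_convergence (fun _ => (1 : ℝ))
      (fun n => ((hGcont n).measurable.comp hX).aestronglyMeasurable) (integrable_const _)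
      (fun n => ae_of_all _ fun ω => ?_) (ae_of_all _ fun ω => hGlim (X ω))
    exact (norm_exp_mul_cutoff_le a b u n (X ω)).trans
      (Set.indicator_le_self' (fun _ _ => zero_le_one) _)
  have hFlim : ∀ w : ℝ, Tendsto (fun n => 𝓕 (G n) w) atTop
      (𝓝 (-Complex.I * f (u - 2 * Real.pi * w))) := by
    intro w
    have hval : -Complex.I * f (u - 2 * Real.pi * w) =
        ∫ x : ℝ, Complex.exp (((-2 * Real.pi * x * w : ℝ) : ℂ) * Complex.I) •
          (Complex.exp (Complex.I * (u : ℂ) * (x : ℂ)) *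
            (Set.Icc a b).indicator (fun _ => (1 : ℂ)) x) := by
      rw [eq_I_mul_integral a b f hf0 hf, ← mul_assoc, neg_mul, Complex.I_mul_I, neg_neg, one_mul,
        intervalIntegral.integral_of_le hab.le, ← integral_Icc_eq_integral_Ioc,
        ← integral_indicator measurableSet_Icc]
      refine integral_congr_ae (ae_of_all _ fun x => ?_)
      by_cases h : x ∈ Set.Icc a b
      · simp only [Set.indicator_of_mem h, mul_one, smul_eq_mul, ← Complex.exp_add]
        congr 1
        push_cast
        ring
      · simp [Set.indicator_of_notMem h]
    rw [hval]
    simp_rw [Real.fourier_real_eq_integral_exp_smul]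
    refine tendsto_integral_of_dominated_convergence
      ((Set.Icc (a - 1) (b + 1)).indicator (fun _ => (1 : ℝ)))
      (fun n => ?_) (integrable_indicator_Icc_one _ _)
      (fun n => ae_of_all _ fun x => ?_) (ae_of_all _ fun x => (hGlim x).const_smul _)
    · have hc : Continuous fun x : ℝ =>
          Complex.exp (((-2 * Real.pi * x * w : ℝ) : ℂ) * Complex.I) := by fun_prop
      exact (hc.smul (hGcont n)).aestronglyMeasurable
    · rw [norm_smul, Complex.norm_exp_ofReal_mul_I, one_mul]
      exact norm_exp_mul_cutoff_le a b u n x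
  have hFbd : ∀ n w, ‖𝓕 (G n) w‖ ≤
      ∫ x, (Set.Icc (a - 1) (b + 1)).indicator (fun _ => (1 : ℝ)) x := by
    intro n w
    rw [Real.fourier_real_eq_integral_exp_smul]
    refine norm_integral_le_of_norm_le (integrable_indicator_Icc_one _ _)
      (ae_of_all _ fun x => ?_)
    rw [norm_smul, Complex.norm_exp_ofReal_mul_I, one_mul]
    exact norm_exp_mul_cutoff_le a b u n x
  have hφ2 : Integrable (fun w : ℝ => φ (2 * Real.pi * w)) :=
    hφInt.comp_mul_left' (by positivity)
  have hR : Tendsto (fun n => ∫ w : ℝ, 𝓕 (G n) w * φ (2 * Real.pi * w)) atTop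
      (𝓝 (∫ w : ℝ, -Complex.I * f (u - 2 * Real.pi * w) * φ (2 * Real.pi * w))) := by
    refine tendsto_integral_of_dominated_convergence
      (fun w => (∫ x, (Set.Icc (a - 1) (b + 1)).indicator (fun _ => (1 : ℝ)) x) *
        ‖φ (2 * Real.pi * w)‖)
      (fun n => (hGF n).aestronglyMeasurable.mul hφ2.aestronglyMeasurable)
      (hφ2.norm.const_mul _)
      (fun n => ae_of_all _ fun w => ?_) (ae_of_all _ fun w => (hFlim w).mul_const _)
    rw [norm_mul]
    exact mul_le_mul_of_nonneg_right (hFbd n w) (norm_nonneg _)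
  simp_rw [hpars] at hL
  rw [tendsto_nhds_unique hL hR,
    Measure.integral_comp_mul_left (fun v => -Complex.I * f (u - v) * φ v) (2 * Real.pi),
    ← integral_sub_left_eq_self (fun y => f y * φ (u - y)) volume u]
  simp_rw [sub_sub_cancel, mul_assoc]
  rw [integral_const_mul, abs_of_pos (by positivity), Complex.real_smul]
  push_cast
  field_simp
end
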